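/- For finite subsets I, J, I', J' of ℤ, Cx_I ⊕ Cx_J ≅ Cx_{I'} ⊕ Cx_{J'} as graded C-modules if and only if I ∪ J = I' ∪ J' and I ∩ J = I' ∩ J'. -/

import Mathlib

open scoped symmDiff

noncomputable section

/-- The ring `C = k[x_n : n ∈ ℤ] / (x_n² + n = x_m² + m)`. -/
abbrev WeylC (k : Type) [Field k] : Type :=
  MvPolynomial ℤ k ⧸ Ideal.span { p : MvPolynomial ℤ k |
    ∃ m n : ℤ, p = MvPolynomial.X n ^ 2 + (n : MvPolynomial ℤ k)
      - MvPolynomial.X m ^ 2 - (m : MvPolynomial ℤ k) }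

variable (k : Type) [Field k]

/-- The generator `x_n` of `C`. -/
def xC (n : ℤ) : WeylC k := Ideal.Quotient.mk _ (MvPolynomial.X n)

/-- `x_I := ∏_{i ∈ I} x_i` for a finite subset `I ⊆ ℤ` (with `x_∅ = 1`). -/
def xS (I : Finset ℤ) : WeylC k := ∏ i ∈ I, xC k i

/-- The identity component `C_∅ = k[x_0²]`. -/
def Cphi : Subalgebra k (WeylC k) := Algebra.adjoin k {xC k 0 ^ 2}

/-- The homogeneous component `C_I = C_∅ · x_I` of the `ℤ_fin`-grading on `C`. -/
def Cgrade (I : Finset ℤ) : Submodule k (WeylC k) :=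
  (Cphi k).toSubmodule.map (LinearMap.mulRight k (xS k I))

/-- The graded ideal `Cx_I` generated by `x_I`. -/
def Cx (I : Finset ℤ) : Ideal (WeylC k) := Ideal.span {xS k I}

lemma aux_sq (n : ℤ) : xC k n ^ 2 = xC k 0 ^ 2 - (n : WeylC k) := by
  have h : (Ideal.Quotient.mk (Ideal.span { p : MvPolynomial ℤ k |
    ∃ m n : ℤ, p = MvPolynomial.X n ^ 2 + (n : MvPolynomial ℤ k)
      - MvPolynomial.X m ^ 2 - (m : MvPolynomial ℤ k) })) (MvPolynomial.X n ^ 2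
      + (n : MvPolynomial ℤ k) - MvPolynomial.X 0 ^ 2 - ((0 : ℤ) : MvPolynomial ℤ k)) = 0 :=
    Ideal.Quotient.eq_zero_iff_mem.2 (Ideal.subset_span ⟨0, n, rfl⟩)
  simp only [map_sub, map_add, map_pow, map_intCast, Int.cast_zero, sub_zero] at h
  unfold xC
  linear_combination h

lemma aux_sq_mem (n : ℤ) : xC k n ^ 2 ∈ Cphi k := by
  rw [aux_sq]
  exact sub_mem (Algebra.subset_adjoin rfl) (intCast_mem _ n)

lemma aux_xS_mem (I : Finset ℤ) : xS k I ∈ Cgrade k I :=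
  ⟨1, one_mem (Cphi k), by simp⟩

lemma aux_grade_mul {a y : WeylC k} (ha : a ∈ Cphi k) {K : Finset ℤ} (hy : y ∈ Cgrade k K) :
    a * y ∈ Cgrade k K := by
  obtain ⟨b, hb, rfl⟩ := hy
  exact ⟨a * b, (Cphi k).mul_mem ha hb, by simp [mul_assoc]⟩

/-- points of `C` -/
lemma aux_phi [CharZero k] (w : ℤ) : ∃ φ : WeylC k →ₐ[k] AlgebraicClosure k,
    ∀ n, φ (xC k n) ^ 2 = (w : AlgebraicClosure k) - n := by
  have h : ∀ n : ℤ, ∃ r : AlgebraicClosure k, r ^ 2 = (w : AlgebraicClosure k) - n :=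
    fun n => IsAlgClosed.exists_pow_nat_eq _ (by norm_num)
  choose r hr using h
  refine ⟨Ideal.Quotient.liftₐ _ (MvPolynomial.aeval r) ?_, ?_⟩
  · intro a ha
    have : Ideal.span { p : MvPolynomial ℤ k |
      ∃ m n : ℤ, p = MvPolynomial.X n ^ 2 + (n : MvPolynomial ℤ k)
      - MvPolynomial.X m ^ 2 - (m : MvPolynomial ℤ k) } ≤
        RingHom.ker (MvPolynomial.aeval r : MvPolynomial ℤ k →ₐ[k] AlgebraicClosure k) := by
      rw [Ideal.span_le]
      rintro _ ⟨m, n, rfl⟩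
      simp [RingHom.mem_ker, hr]
    exact this ha
  · intro n
    change (MvPolynomial.aeval r (MvPolynomial.X n)) ^ 2 = _
    rw [MvPolynomial.aeval_X, hr]

lemma aux_ne [CharZero k] {w : ℤ} {φ : WeylC k →ₐ[k] AlgebraicClosure k}
    (hφ : ∀ n, φ (xC k n) ^ 2 = (w : AlgebraicClosure k) - n) {I : Finset ℤ} (hw : w ∉ I) :
    φ (xS k I) ≠ 0 := by
  unfold xS
  rw [map_prod, Finset.prod_ne_zero_iff]
  intro i hi h0
  have := hφ i
  rw [h0, zero_pow two_ne_zero, eq_comm, sub_eq_zero] at this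
  have : w = i := by exact_mod_cast this
  exact hw (this ▸ hi)

lemma aux_cancel [CharZero k] {T : Finset ℤ} {y f : WeylC k}
    (hy : ∀ (w : ℤ) (φ : WeylC k →ₐ[k] AlgebraicClosure k), w ∉ T →
      (∀ n, φ (xC k n) ^ 2 = (w : AlgebraicClosure k) - n) → φ y ≠ 0)
    (hf : f ∈ Cphi k) (h : y * f = 0) : f = 0 := by
  unfold Cphi at hf
  rw [Algebra.adjoin_singleton_eq_range_aeval] at hf
  obtain ⟨g, rfl⟩ := hf
  have : g = 0 := by
    apply Polynomial.eq_zero_of_infinite_isRoot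
    have hinf : ((fun w : ℤ => (w : k)) '' (T : Set ℤ)ᶜ).Infinite :=
      (T.finite_toSet.infinite_compl).image Int.cast_injective.injOn
    refine hinf.mono ?_
    rintro _ ⟨w, hw, rfl⟩
    obtain ⟨φ, hφ⟩ := aux_phi k w
    have h1 := congrArg φ h
    rw [map_mul, map_zero] at h1
    have h2 := (mul_eq_zero.1 h1).resolve_left (hy w φ (by simpa using hw) hφ)
    have h3 : φ (xC k 0 ^ 2) = algebraMap k (AlgebraicClosure k) (w : k) := by
      rw [map_pow, hφ]; simp
    erw [← Polynomial.aeval_algHom_apply] at h2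
    rw [h3, Polynomial.aeval_algebraMap_apply] at h2
    simpa using h2
  rw [this]; exact map_zero _

lemma aux_vanish [CharZero k] {w : ℤ} {φ : WeylC k →ₐ[k] AlgebraicClosure k}
    (hφ : ∀ n, φ (xC k n) ^ 2 = (w : AlgebraicClosure k) - n) {I J : Finset ℤ} (hI : w ∉ I)
    (hJ : w ∈ J) {a : WeylC k} (h : a * xS k I ∈ Cx k J) : φ a = 0 := by
  obtain ⟨b, hb⟩ := Ideal.mem_span_singleton'.1 h
  have h0 : φ (xS k J) = 0 := by
    unfold xS
    rw [map_prod]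
    refine Finset.prod_eq_zero hJ ?_
    have := hφ w
    rw [sub_self] at this
    exact pow_eq_zero_iff two_ne_zero |>.1 this
  have := congrArg φ hb
  rw [map_mul, map_mul, h0, mul_zero] at this
  exact (mul_eq_zero.1 this.symm).resolve_right (aux_ne k hφ hI)

/-- the generator as an element of the ideal -/
def auxGen (I : Finset ℤ) : Cx k I := ⟨xS k I, Ideal.mem_span_singleton_self _⟩

lemma auxGen_coe (I : Finset ℤ) : (auxGen k I : WeylC k) = xS k I := rfl

lemma aux_lin {I J I' J' : Finset ℤ}
    (f : (↥(Cx k I) × ↥(Cx k J)) →ₗ[WeylC k] (↥(Cx k I') × ↥(Cx k J')))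
    (p : ↥(Cx k I) × ↥(Cx k J)) :
    (xS k I * xS k J) • f p = (p.1.1 * xS k J) • f (auxGen k I, 0)
      + (p.2.1 * xS k I) • f (0, auxGen k J) := by
  rw [← map_smul, ← map_smul, ← map_smul, ← map_add]
  congr 1
  apply Prod.ext <;> apply Subtype.ext <;> simp [auxGen] <;> ring

lemma aux_forward [CharZero k] {I J I' J' : Finset ℤ}
    (e : (↥(Cx k I) × ↥(Cx k J)) ≃ₗ[WeylC k] (↥(Cx k I') × ↥(Cx k J')))
    (h1 : ∀ (K : Finset ℤ) (p : ↥(Cx k I) × ↥(Cx k J)),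
        (p.1 : WeylC k) ∈ Cgrade k K → (p.2 : WeylC k) ∈ Cgrade k K →
        ((e p).1 : WeylC k) ∈ Cgrade k K ∧ ((e p).2 : WeylC k) ∈ Cgrade k K)
    (h2 : ∀ (K : Finset ℤ) (q : ↥(Cx k I') × ↥(Cx k J')),
        (q.1 : WeylC k) ∈ Cgrade k K → (q.2 : WeylC k) ∈ Cgrade k K →
        ((e.symm q).1 : WeylC k) ∈ Cgrade k K ∧ ((e.symm q).2 : WeylC k) ∈ Cgrade k K) :
    I' ∪ J' ⊆ I ∪ J ∧ I' ∩ J' ⊆ I ∩ J := by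
  obtain ⟨⟨a, ha, ha'⟩, ⟨b, hb, hb'⟩⟩ := h1 I (auxGen k I, 0) (aux_xS_mem k I) (zero_mem _)
  obtain ⟨⟨c, hc, hc'⟩, ⟨d, hd, hd'⟩⟩ := h1 J (0, auxGen k J) (zero_mem _) (aux_xS_mem k J)
  obtain ⟨⟨a₁, ha₁, ha₁'⟩, ⟨b₁, hb₁, hb₁'⟩⟩ :=
    h2 I' (auxGen k I', 0) (aux_xS_mem k I') (zero_mem _)
  obtain ⟨⟨c₁, hc₁, hc₁'⟩, ⟨d₁, hd₁, hd₁'⟩⟩ :=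
    h2 J' (0, auxGen k J') (zero_mem _) (aux_xS_mem k J')
  have hA : a * xS k I ∈ Cx k I' := by
    have := (e (auxGen k I, 0)).1.2; rwa [← ha'] at this
  have hB : b * xS k I ∈ Cx k J' := by
    have := (e (auxGen k I, 0)).2.2; rwa [← hb'] at this
  have hC : c * xS k J ∈ Cx k I' := by
    have := (e (0, auxGen k J)).1.2; rwa [← hc'] at this
  have hD : d * xS k J ∈ Cx k J' := by
    have := (e (0, auxGen k J)).2.2; rwa [← hd'] at this
  have L1 := aux_lin k e.symm.toLinearMap (e (auxGen k I, 0))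
  have L2 := aux_lin k e.symm.toLinearMap (e (0, auxGen k J))
  simp only [LinearEquiv.coe_coe, LinearEquiv.symm_apply_apply] at L1 L2
  have L11 := congrArg (fun p => (p.1 : WeylC k)) L1
  have L12 := congrArg (fun p => (p.2 : WeylC k)) L1
  have L21 := congrArg (fun p => (p.1 : WeylC k)) L2
  have L22 := congrArg (fun p => (p.2 : WeylC k)) L2
  simp only [LinearMap.mulRight_apply] at ha' hb' hc' hd' ha₁' hb₁' hc₁' hd₁'
  simp only [Prod.fst_add, Prod.snd_add, Prod.smul_fst, Prod.smul_snd, Submodule.coe_add,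
    Submodule.coe_smul, smul_eq_mul, ← ha', ← hb', ← hc', ← hd', ← ha₁', ← hb₁', ← hc₁',
    ← hd₁', auxGen_coe, ZeroMemClass.coe_zero, mul_zero] at L11 L12 L21 L22
  have hy : ∀ S : Finset ℤ, ∀ (w : ℤ) (φ : WeylC k →ₐ[k] AlgebraicClosure k),
      w ∉ (S ∪ I' ∪ J') →
      (∀ n, φ (xC k n) ^ 2 = (w : AlgebraicClosure k) - n) →
      φ (xS k S * xS k I' * xS k J') ≠ 0 := by
    intro S w φ hw hφ
    simp only [Finset.mem_union, not_or] at hw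
    rw [map_mul, map_mul]
    exact mul_ne_zero (mul_ne_zero (aux_ne k hφ hw.1.1) (aux_ne k hφ hw.1.2)) (aux_ne k hφ hw.2)
  have E11 : a * a₁ + b * c₁ - 1 = 0 := aux_cancel k (hy I)
    (sub_mem (add_mem (mul_mem ha ha₁) (mul_mem hb hc₁)) (one_mem _))
    (by linear_combination -L11)
  have E12 : a * b₁ + b * d₁ = 0 := aux_cancel k (hy I)
    (add_mem (mul_mem ha hb₁) (mul_mem hb hd₁))
    (by linear_combination -L12)
  have E21 : c * a₁ + d * c₁ = 0 := aux_cancel k (hy J)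
    (add_mem (mul_mem hc ha₁) (mul_mem hd hc₁))
    (by linear_combination -L21)
  have E22 : c * b₁ + d * d₁ - 1 = 0 := aux_cancel k (hy J)
    (sub_mem (add_mem (mul_mem hc hb₁) (mul_mem hd hd₁)) (one_mem _))
    (by linear_combination -L22)
  clear L1 L2 L11 L12 L21 L22
  constructor
  · intro i hi
    by_contra hn
    simp only [Finset.mem_union, not_or] at hn
    obtain ⟨φ, hφ⟩ := aux_phi k i
    have F11 := congrArg φ E11
    have F12 := congrArg φ E12
    have F21 := congrArg φ E21
    have F22 := congrArg φ E22
    simp only [map_add, map_sub, map_mul, map_one, map_zero] at F11 F12 F21 F22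
    rcases Finset.mem_union.1 hi with hi | hi
    · rw [aux_vanish k hφ hn.1 hi hA] at F11 F12
      rw [aux_vanish k hφ hn.2 hi hC] at F21 F22
      have : (1 : AlgebraicClosure k) = 0 := by
        linear_combination -F22 - φ d * φ d₁ * F11 + φ d * φ c₁ * F12
      exact one_ne_zero this
    · rw [aux_vanish k hφ hn.1 hi hB] at F11 F12
      rw [aux_vanish k hφ hn.2 hi hD] at F21 F22
      have : (1 : AlgebraicClosure k) = 0 := by
        linear_combination -F22 - φ c * φ b₁ * F11 + φ c * φ a₁ * F12
      exact one_ne_zero this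
  · intro i hi
    obtain ⟨hi1, hi2⟩ := Finset.mem_inter.1 hi
    obtain ⟨φ, hφ⟩ := aux_phi k i
    have F11 := congrArg φ E11
    have F22 := congrArg φ E22
    simp only [map_add, map_sub, map_mul, map_one, map_zero] at F11 F22
    rw [Finset.mem_inter]
    constructor
    · by_contra hn
      rw [aux_vanish k hφ hn hi1 hA, aux_vanish k hφ hn hi2 hB] at F11
      simp at F11
    · by_contra hn
      rw [aux_vanish k hφ hn hi1 hC, aux_vanish k hφ hn hi2 hD] at F22
      simp at F22

/-- `∏ x_i ^ 2` in `C_∅` -/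
def auxP (S : Finset ℤ) : Cphi k := ∏ i ∈ S, ⟨xC k i ^ 2, aux_sq_mem k i⟩

lemma auxP_coe (S : Finset ℤ) : (auxP k S : WeylC k) = ∏ i ∈ S, xC k i ^ 2 := by
  unfold auxP
  exact map_prod (Cphi k).val _ _

lemma auxP_coprime [CharZero k] {S T : Finset ℤ} (h : Disjoint S T) :
    IsCoprime (auxP k S) (auxP k T) := by
  unfold auxP
  refine IsCoprime.prod_left fun i hi => IsCoprime.prod_right fun j hj => ?_
  have hne : i ≠ j := fun hij => Finset.disjoint_left.1 h hi (hij ▸ hj)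
  have hne' : ((j : k) - i) ≠ 0 := by
    rw [sub_ne_zero]; exact_mod_cast hne.symm
  refine ⟨algebraMap k (Cphi k) ((j : k) - i)⁻¹, -algebraMap k (Cphi k) ((j : k) - i)⁻¹, ?_⟩
  apply Subtype.ext
  have h1 : algebraMap k (WeylC k) ((j : k) - i)⁻¹ * ((j : WeylC k) - i) = 1 := by
    have := map_mul (algebraMap k (WeylC k)) ((j : k) - i)⁻¹ ((j : k) - i)
    rw [inv_mul_cancel₀ hne', map_one, map_sub, map_intCast, map_intCast] at this
    exact this.symm
  have h2 : algebraMap k (WeylC k) ((j : k) - i)⁻¹ * xC k i ^ 2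
      + -algebraMap k (WeylC k) ((j : k) - i)⁻¹ * xC k j ^ 2 = 1 := by
    rw [aux_sq k i, aux_sq k j]
    linear_combination h1
  exact h2

lemma aux_mem {I J S : Finset ℤ} (h : J ⊆ I ∪ S) {x : WeylC k} (hx : x ∈ Cx k I)
    (u : WeylC k) : u * auxP k S * x ∈ Cx k J := by
  obtain ⟨b, rfl⟩ := Ideal.mem_span_singleton'.1 hx
  rw [Cx, Ideal.mem_span_singleton, auxP_coe]
  have h1 : xS k J ∣ xS k (I ∪ S) := Finset.prod_dvd_prod_of_subset _ _ _ h
  have h2 : xS k (I ∪ S) ∣ xS k I * xS k S := by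
    refine ⟨xS k (I ∩ S), ?_⟩
    exact (Finset.prod_union_inter).symm
  have h3 : xS k S ∣ ∏ i ∈ S, xC k i ^ 2 := Finset.prod_dvd_prod_of_dvd _ _ fun i _ =>
    dvd_pow_self _ two_ne_zero
  have h4 := h1.trans (h2.trans (mul_dvd_mul_left (xS k I) h3))
  obtain ⟨t, ht⟩ := h4
  exact ⟨u * b * t, by linear_combination u * b * ht⟩

/-- the linear map of a matrix -/
def auxMap {I J I' J' : Finset ℤ} (a b c d : WeylC k)
    (ha : ∀ x ∈ Cx k I, a * x ∈ Cx k I') (hb : ∀ x ∈ Cx k J, b * x ∈ Cx k I')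
    (hc : ∀ x ∈ Cx k I, c * x ∈ Cx k J') (hd : ∀ x ∈ Cx k J, d * x ∈ Cx k J') :
    (↥(Cx k I) × ↥(Cx k J)) →ₗ[WeylC k] (↥(Cx k I') × ↥(Cx k J')) where
  toFun p := (⟨a * p.1 + b * p.2, add_mem (ha _ p.1.2) (hb _ p.2.2)⟩,
    ⟨c * p.1 + d * p.2, add_mem (hc _ p.1.2) (hd _ p.2.2)⟩)
  map_add' p q := by
    apply Prod.ext <;> apply Subtype.ext <;> simp <;> ring
  map_smul' r p := by
    apply Prod.ext <;> apply Subtype.ext <;> simp <;> ring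

lemma aux_backward [CharZero k] {I J I' J' : Finset ℤ} (hU : I ∪ J = I' ∪ J')
    (hN : I ∩ J = I' ∩ J') :
    ∃ e : (↥(Cx k I) × ↥(Cx k J)) ≃ₗ[WeylC k] (↥(Cx k I') × ↥(Cx k J')),
      (∀ (K : Finset ℤ) (p : ↥(Cx k I) × ↥(Cx k J)),
        (p.1 : WeylC k) ∈ Cgrade k K → (p.2 : WeylC k) ∈ Cgrade k K →
        ((e p).1 : WeylC k) ∈ Cgrade k K ∧ ((e p).2 : WeylC k) ∈ Cgrade k K) ∧
      (∀ (K : Finset ℤ) (q : ↥(Cx k I') × ↥(Cx k J')),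
        (q.1 : WeylC k) ∈ Cgrade k K → (q.2 : WeylC k) ∈ Cgrade k K →
        ((e.symm q).1 : WeylC k) ∈ Cgrade k K ∧ ((e.symm q).2 : WeylC k) ∈ Cgrade k K) := by
  have hU' : ∀ i, (i ∈ I ∨ i ∈ J) ↔ (i ∈ I' ∨ i ∈ J') := fun i => by
    rw [← Finset.mem_union, hU, Finset.mem_union]
  have hN' : ∀ i, (i ∈ I ∧ i ∈ J) ↔ (i ∈ I' ∧ i ∈ J') := fun i => by
    rw [← Finset.mem_inter, hN, Finset.mem_inter]
  set P := (J \ I) ∩ I' with hP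
  set Q := (I \ J) ∩ J' with hQ
  set R := (I \ J) ∩ I' with hR
  set S := (J \ I) ∩ J' with hS
  have dis : ∀ A B : Finset ℤ, (∀ i ∈ A, i ∉ B) → Disjoint A B := fun A B h =>
    Finset.disjoint_left.2 fun {i} hi => h i hi
  have cop : IsCoprime (auxP k P * auxP k Q) (auxP k R * auxP k S) := by
    refine IsCoprime.mul_left (IsCoprime.mul_right ?_ ?_) (IsCoprime.mul_right ?_ ?_) <;>
    · refine auxP_coprime k (dis _ _ fun i => ?_)
      have := hU' i
      have := hN' i
      simp only [hP, hQ, hR, hS, Finset.mem_inter, Finset.mem_sdiff]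
      tauto
  obtain ⟨u, v, huv⟩ := cop
  have huv' : (u : WeylC k) * (auxP k P * auxP k Q) + v * (auxP k R * auxP k S) = 1 :=
    congrArg Subtype.val huv
  have sub : ∀ A B : Finset ℤ, (∀ i ∈ A, i ∈ B) → A ⊆ B := fun A B h => h
  have m : ∀ {A B T : Finset ℤ} (t : WeylC k), B ⊆ A ∪ T →
    ∀ x ∈ Cx k A, t * auxP k T * x ∈ Cx k B := fun t h x hx => aux_mem k h hx t
  have s1 : I' ⊆ I ∪ P := sub _ _ fun i => by
    have := hU' i; have := hN' i
    simp only [hP, Finset.mem_union, Finset.mem_inter, Finset.mem_sdiff]; tauto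
  have s2 : I' ⊆ J ∪ R := sub _ _ fun i => by
    have := hU' i; have := hN' i
    simp only [hR, Finset.mem_union, Finset.mem_inter, Finset.mem_sdiff]; tauto
  have s3 : J' ⊆ I ∪ S := sub _ _ fun i => by
    have := hU' i; have := hN' i
    simp only [hS, Finset.mem_union, Finset.mem_inter, Finset.mem_sdiff]; tauto
  have s4 : J' ⊆ J ∪ Q := sub _ _ fun i => by
    have := hU' i; have := hN' i
    simp only [hQ, Finset.mem_union, Finset.mem_inter, Finset.mem_sdiff]; tauto
  have t1 : I ⊆ I' ∪ Q := sub _ _ fun i => by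
    have := hU' i; have := hN' i
    simp only [hQ, Finset.mem_union, Finset.mem_inter, Finset.mem_sdiff]; tauto
  have t2 : I ⊆ J' ∪ R := sub _ _ fun i => by
    have := hU' i; have := hN' i
    simp only [hR, Finset.mem_union, Finset.mem_inter, Finset.mem_sdiff]; tauto
  have t3 : J ⊆ I' ∪ S := sub _ _ fun i => by
    have := hU' i; have := hN' i
    simp only [hS, Finset.mem_union, Finset.mem_inter, Finset.mem_sdiff]; tauto
  have t4 : J ⊆ J' ∪ P := sub _ _ fun i => by
    have := hU' i; have := hN' i
    simp only [hP, Finset.mem_union, Finset.mem_inter, Finset.mem_sdiff]; tauto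
  clear_value P Q R S
  let f := auxMap k (u * auxP k P : WeylC k) (-v * auxP k R) (1 * auxP k S) (1 * auxP k Q)
    (m u s1) (m (-v) s2) (m 1 s3) (m 1 s4)
  let g := auxMap k (1 * auxP k Q : WeylC k) (v * auxP k R) (-1 * auxP k S) (u * auxP k P)
    (m 1 t1) (m v t2) (m (-1) t3) (m u t4)
  have hfg : f.comp g = LinearMap.id := by
    refine LinearMap.ext fun p => ?_
    apply Prod.ext <;> apply Subtype.ext <;> simp only [f, g, auxMap, LinearMap.comp_apply,
      LinearMap.coe_mk, AddHom.coe_mk, LinearMap.id_apply]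
    · linear_combination (p.1 : WeylC k) * huv'
    · linear_combination (p.2 : WeylC k) * huv'
  have hgf : g.comp f = LinearMap.id := by
    refine LinearMap.ext fun p => ?_
    apply Prod.ext <;> apply Subtype.ext <;> simp only [f, g, auxMap, LinearMap.comp_apply,
      LinearMap.coe_mk, AddHom.coe_mk, LinearMap.id_apply]
    · linear_combination (p.1 : WeylC k) * huv'
    · linear_combination (p.2 : WeylC k) * huv'
  have hu := u.2
  have hv := v.2
  have n1 : (1 : WeylC k) ∈ Cphi k := one_mem _
  have gm : ∀ (t : WeylC k), t ∈ Cphi k → ∀ (T K : Finset ℤ) (x : WeylC k), x ∈ Cgrade k K →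
    t * auxP k T * x ∈ Cgrade k K := fun t ht T K x hx =>
      aux_grade_mul k (mul_mem ht (auxP k T).2) hx
  refine ⟨LinearEquiv.ofLinear f g hfg hgf, ?_, ?_⟩
  · intro K p h1 h2
    exact ⟨add_mem (gm _ hu _ _ _ h1) (gm _ (neg_mem hv) _ _ _ h2),
      add_mem (gm _ n1 _ _ _ h1) (gm _ n1 _ _ _ h2)⟩
  · intro K p h1 h2
    exact ⟨add_mem (gm _ n1 _ _ _ h1) (gm _ hv _ _ _ h2),
      add_mem (gm _ (neg_mem n1) _ _ _ h1) (gm _ hu _ _ _ h2)⟩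

variable [CharZero k]

/-- `Cx_I ⊕ Cx_J ≅ Cx_{I'} ⊕ Cx_{J'}` as `ℤ_fin`-graded
`C`-modules (a `C`-linear equivalence preserving homogeneous components in both
directions) if and only if `I ∪ J = I' ∪ J'` and `I ∩ J = I' ∩ J'`. -/
theorem cx_sum_iso_iff (I J I' J' : Finset ℤ) :
    (∃ e : (↥(Cx k I) × ↥(Cx k J)) ≃ₗ[WeylC k] (↥(Cx k I') × ↥(Cx k J')),
      (∀ (K : Finset ℤ) (p : ↥(Cx k I) × ↥(Cx k J)),
        (p.1 : WeylC k) ∈ Cgrade k K → (p.2 : WeylC k) ∈ Cgrade k K →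
        ((e p).1 : WeylC k) ∈ Cgrade k K ∧ ((e p).2 : WeylC k) ∈ Cgrade k K) ∧
      (∀ (K : Finset ℤ) (q : ↥(Cx k I') × ↥(Cx k J')),
        (q.1 : WeylC k) ∈ Cgrade k K → (q.2 : WeylC k) ∈ Cgrade k K →
        ((e.symm q).1 : WeylC k) ∈ Cgrade k K ∧ ((e.symm q).2 : WeylC k) ∈ Cgrade k K)) ↔
    I ∪ J = I' ∪ J' ∧ I ∩ J = I' ∩ J' := by
  constructor
  · rintro ⟨e, h1, h2⟩
    obtain ⟨a, b⟩ := aux_forward k e h1 h2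
    obtain ⟨c, d⟩ := aux_forward k e.symm h2 h1
    exact ⟨c.antisymm a, d.antisymm b⟩
  · rintro ⟨hU, hN⟩
    exact aux_backward k hU hN
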